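/- arXiv:1901.05383 — 3 statements merged into one kernel-verified Lean document; each statement's English description precedes it below -/
import Mathlib

section
/- Let P be a nonzero polynomial in two variables over ℂ of total degree d ≥ 1, and let P_d be its homogeneous component of degree d. Then for every z ∈ Z(P_d) with z ≠ 0 and every ε > 0 there exists λ₀ > 0 such that for all 0 < λ < λ₀ there is a point w ∈ Z(P) with ‖λw − z‖ < ε; that is, every nonzero point of Z(P_d) is a limit of points of the rescaled zero sets λ·Z(P) as λ → 0. -/
open MvPolynomial

/-- The zero locus in `ℂ²` (with the Euclidean metric) of a polynomial in two variables. -/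
def zeroSet (Q : MvPolynomial (Fin 2) ℂ) : Set (EuclideanSpace ℂ (Fin 2)) :=
  {z | MvPolynomial.eval (fun i => z i) Q = 0}

/-!
Clearing denominators in `P(x / t)` gives a family of polynomials of bounded degree, continuous in
`t`, whose zero set is `t · Z(P)` for `t ≠ 0` and `Z(P_d)` for `t = 0`. A zero of the limit of such
a family is a limit of zeros. Indeed, restrict to the line through that zero `z` and a point `y` at
which the limit does not vanish: if a univariate polynomial of degree at most `n` has no root within
`r` of a point, its values grow by a factor of at most `(1 + ‖y - z‖ / r) ^ n` from there, whereas
the value at `z` tends to zero and the value at `y` does not.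
-/

open Filter Topology

section Roots

variable {K : Type*} [NormedField K]

lemma norm_eval_le_of_forall_roots_le_norm_sub {q : Polynomial K} (hq : q.Splits) {r : ℝ}
    (hr : 0 < r) {x : K} (hx : ∀ a ∈ q.roots, r ≤ ‖x - a‖) (y : K) :
    ‖q.eval y‖ ≤ (1 + ‖y - x‖ / r) ^ q.natDegree * ‖q.eval x‖ := by
  have norm_eval (u : K) :
      ‖q.eval u‖ = ‖q.leadingCoeff‖ * (q.roots.map fun a => ‖u - a‖).prod := by
    rw [hq.eval_eq_prod_roots, norm_mul]
    congr 1
    simpa only [Multiset.map_map] using!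
      map_multiset_prod (normHom : K →*₀ ℝ) (q.roots.map fun a => u - a)
  have norm_sub_root_le : ∀ a ∈ q.roots, ‖y - a‖ ≤ (1 + ‖y - x‖ / r) * ‖x - a‖ := fun a ha => calc
    ‖y - a‖ ≤ ‖x - a‖ + ‖y - x‖ / r * r := by
      rw [div_mul_cancel₀ _ hr.ne', add_comm]
      exact norm_sub_le_norm_sub_add_norm_sub y x a
    _ ≤ ‖x - a‖ + ‖y - x‖ / r * ‖x - a‖ := by gcongr; exact hx a ha
    _ = (1 + ‖y - x‖ / r) * ‖x - a‖ := by ring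
  calc
    ‖q.eval y‖ = ‖q.leadingCoeff‖ * (q.roots.map fun a => ‖y - a‖).prod := norm_eval y
    _ ≤ ‖q.leadingCoeff‖ * (q.roots.map fun a => (1 + ‖y - x‖ / r) * ‖x - a‖).prod := by
      gcongr
      exact Multiset.prod_map_le_prod_map₀ _ _ (fun _ _ => norm_nonneg _) norm_sub_root_le
    _ = (1 + ‖y - x‖ / r) ^ q.natDegree * ‖q.eval x‖ := by
      rw [Multiset.prod_map_mul, Multiset.map_const', Multiset.prod_replicate,
        ← hq.natDegree_eq_card_roots, norm_eval x, mul_left_comm]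

lemma exists_root_norm_sub_lt {q : Polynomial K} (hq : q.Splits) {n : ℕ} (hn : q.natDegree ≤ n)
    {r : ℝ} (hr : 0 < r) {x y : K} (hxy : (1 + ‖y - x‖ / r) ^ n * ‖q.eval x‖ < ‖q.eval y‖) :
    ∃ a, q.IsRoot a ∧ ‖x - a‖ < r := by
  by_contra! h
  refine hxy.not_ge ?_
  calc
    ‖q.eval y‖ ≤ (1 + ‖y - x‖ / r) ^ q.natDegree * ‖q.eval x‖ :=
      norm_eval_le_of_forall_roots_le_norm_sub hq hr
        (fun a ha => h a (Polynomial.isRoot_of_mem_roots ha)) y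
    _ ≤ (1 + ‖y - x‖ / r) ^ n * ‖q.eval x‖ := by
      gcongr
      exact le_add_of_nonneg_right (by positivity)

end Roots

section LineRestriction

variable {R σ : Type*} [CommRing R]

/-- The restriction of `F` to the line through `z` and `y`, as a polynomial in the affine parameter
which is `0` at `z` and `1` at `y`. -/
noncomputable def lineRestriction (z y : σ → R) (F : MvPolynomial σ R) : Polynomial R :=
  aeval (fun i => Polynomial.C (y i - z i) * Polynomial.X + Polynomial.C (z i)) F

lemma eval_lineRestriction (z y : σ → R) (F : MvPolynomial σ R) (s : R) :
    (lineRestriction z y F).eval s = eval (AffineMap.lineMap z y s) F := by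
  rw [lineRestriction, aeval_def, ← Polynomial.coe_evalRingHom, hom_eval₂, ← eval₂_id]
  congr 1
  · ext r
    simp
  · funext i
    simp [AffineMap.lineMap_apply, mul_comm]

lemma natDegree_lineRestriction_le (z y : σ → R) (F : MvPolynomial σ R) :
    (lineRestriction z y F).natDegree ≤ F.totalDegree := by
  simpa only [lineRestriction, mul_one] using
    aeval_natDegree_le F le_rfl _ fun _ => Polynomial.natDegree_linear_le

end LineRestriction

section LimitsOfZeros

variable {K σ ι : Type*} [NormedField K] [IsAlgClosed K]

lemma exists_eval_lineMap_eq_zero {F : MvPolynomial σ K} {n : ℕ} (hF : F.totalDegree ≤ n)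
    {r : ℝ} (hr : 0 < r) {z y : σ → K} (hzy : (1 + 1 / r) ^ n * ‖eval z F‖ < ‖eval y F‖) :
    ∃ s : K, ‖s‖ < r ∧ eval (AffineMap.lineMap z y s) F = 0 := by
  obtain ⟨s, hs, hsr⟩ := exists_root_norm_sub_lt (x := 0) (y := 1)
    (IsAlgClosed.splits (lineRestriction z y F)) ((natDegree_lineRestriction_le z y F).trans hF) hr
    (by simpa [eval_lineRestriction] using hzy)
  exact ⟨s, by simpa using hsr, by rwa [← eval_lineRestriction]⟩

lemma eventually_exists_mem_eval_eq_zero {l : Filter ι} {F : ι → MvPolynomial σ K} {n : ℕ}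
    (hF : ∀ i, (F i).totalDegree ≤ n) {z y : σ → K} {c : K}
    (hz : Tendsto (fun i => eval z (F i)) l (𝓝 0)) (hy : Tendsto (fun i => eval y (F i)) l (𝓝 c))
    (hc : c ≠ 0) {U : Set (σ → K)} (hU : U ∈ 𝓝 z) :
    ∀ᶠ i in l, ∃ x ∈ U, eval x (F i) = 0 := by
  obtain ⟨r, hr, hrU⟩ : ∃ r > 0, ∀ s : K, ‖s‖ < r → AffineMap.lineMap z y s ∈ U := by
    have hline : Tendsto (AffineMap.lineMap z y : K → σ → K) (𝓝 0) (𝓝 z) := by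
      simpa using (AffineMap.lineMap_continuous (p := z) (q := y)).tendsto (0 : K)
    simpa using Metric.eventually_nhds_iff.mp (hline.eventually_mem hU)
  have hlim : Tendsto (fun i => (1 + 1 / r) ^ n * ‖eval z (F i)‖) l (𝓝 0) := by
    simpa using hz.norm.const_mul ((1 + 1 / r) ^ n)
  filter_upwards [hlim.eventually_lt hy.norm (norm_pos_iff.mpr hc)] with i hi
  obtain ⟨s, hs, hzero⟩ := exists_eval_lineMap_eq_zero (hF i) hr hi
  exact ⟨_, hrU s hs, hzero⟩

end LimitsOfZeros

section Dilation

variable {R σ : Type*} [CommSemiring R]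

lemma eval_smul_of_isHomogeneous {F : MvPolynomial σ R} {n : ℕ} (hF : F.IsHomogeneous n) (t : R)
    (x : σ → R) : eval (t • x) F = t ^ n * eval x F := by
  rw [eval_eq, eval_eq, Finset.mul_sum]
  refine Finset.sum_congr rfl fun m hm => ?_
  have hdeg : ∑ i ∈ m.support, m i = n := (hF.degree_eq_sum_deg_support hm).symm
  simp only [Pi.smul_apply, smul_eq_mul, mul_pow, Finset.prod_mul_distrib,
    Finset.prod_pow_eq_pow_sum, hdeg, mul_left_comm]

lemma homogeneousComponent_totalDegree_ne_zero {P : MvPolynomial σ R} (hP : P ≠ 0) :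
    homogeneousComponent P.totalDegree P ≠ 0 := by
  obtain ⟨m, hm, hmdeg⟩ := Finset.exists_mem_eq_sup P.support (support_nonempty.mpr hP)
    fun m => m.sum fun _ e => e
  have hdegree : m.degree = P.totalDegree := hmdeg.symm
  have hcoeff : coeff m (homogeneousComponent P.totalDegree P) = coeff m P := by
    rw [coeff_homogeneousComponent, if_pos hdegree]
  exact ne_zero_iff.mpr ⟨m, hcoeff.trans_ne (mem_support_iff.mp hm)⟩

/-- The polynomial `t ^ d * P (x / t)` in `x`, where `d` is the total degree of `P`, with the
denominators cleared so that it also makes sense for `t = 0`. -/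
noncomputable def dilate (t : R) (P : MvPolynomial σ R) : MvPolynomial σ R :=
  ∑ i ∈ Finset.range (P.totalDegree + 1), C (t ^ (P.totalDegree - i)) * homogeneousComponent i P

lemma eval_dilate (t : R) (P : MvPolynomial σ R) (x : σ → R) :
    eval x (dilate t P) = ∑ i ∈ Finset.range (P.totalDegree + 1),
      t ^ (P.totalDegree - i) * eval x (homogeneousComponent i P) := by
  simp [dilate]

lemma dilate_zero (P : MvPolynomial σ R) :
    dilate 0 P = homogeneousComponent P.totalDegree P := by
  rw [dilate, Finset.sum_range_succ, Finset.sum_eq_zero]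
  · simp
  · intro i hi
    have : P.totalDegree - i ≠ 0 := Nat.sub_ne_zero_of_lt (Finset.mem_range.mp hi)
    simp [this]

lemma eval_smul_dilate (t : R) (P : MvPolynomial σ R) (x : σ → R) :
    eval (t • x) (dilate t P) = t ^ P.totalDegree * eval x P := by
  rw [eval_dilate]
  have hsum : eval x P =
      ∑ i ∈ Finset.range (P.totalDegree + 1), eval x (homogeneousComponent i P) := by
    rw [← map_sum, sum_homogeneousComponent]
  rw [hsum, Finset.mul_sum]
  refine Finset.sum_congr rfl fun i hi => ?_
  rw [eval_smul_of_isHomogeneous (homogeneousComponent_isHomogeneous i P), ← mul_assoc,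
    pow_sub_mul_pow t (Finset.mem_range_succ_iff.mp hi)]

lemma totalDegree_dilate_le (t : R) (P : MvPolynomial σ R) :
    (dilate t P).totalDegree ≤ P.totalDegree := by
  refine totalDegree_finsetSum_le fun i hi => ?_
  exact ((homogeneousComponent_isHomogeneous i P).C_mul _).totalDegree_le.trans
    (Finset.mem_range_succ_iff.mp hi)

lemma tendsto_eval_dilate [TopologicalSpace R] [IsTopologicalSemiring R] (P : MvPolynomial σ R)
    (x : σ → R) :
    Tendsto (fun t => eval x (dilate t P)) (𝓝 0)
      (𝓝 (eval x (homogeneousComponent P.totalDegree P))) := by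
  have hcont : Continuous fun t => eval x (dilate t P) := by
    simp only [eval_dilate]
    fun_prop
  simpa only [dilate_zero] using hcont.tendsto 0

end Dilation

lemma exists_forall_ofReal_of_eventually_nhdsNE_zero {p : ℂ → Prop}
    (h : ∀ᶠ t in 𝓝[≠] (0 : ℂ), p t) : ∃ r > 0, ∀ t : ℝ, 0 < t → t < r → p t := by
  rw [eventually_nhdsWithin_iff, Metric.eventually_nhds_iff] at h
  obtain ⟨r, hr, h⟩ := h
  exact ⟨r, hr, fun t ht htr => h (by simpa [abs_of_pos ht] using htr) (by simpa using ht.ne')⟩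

theorem stmt_4_general {K σ : Type*} [NormedField K] [IsAlgClosed K] {P : MvPolynomial σ K}
    (hP : P ≠ 0) {z : σ → K} (hz : eval z (homogeneousComponent P.totalDegree P) = 0)
    {U : Set (σ → K)} (hU : U ∈ 𝓝 z) :
    ∀ᶠ t in 𝓝[≠] (0 : K), ∃ w, eval w P = 0 ∧ t • w ∈ U := by
  obtain ⟨y, hy⟩ : ∃ y, eval y (homogeneousComponent P.totalDegree P) ≠ 0 := by
    by_contra! h
    exact homogeneousComponent_totalDegree_ne_zero hP (MvPolynomial.funext (by simpa using h))
  have hzeros : ∀ᶠ t in 𝓝 (0 : K), ∃ x ∈ U, eval x (dilate t P) = 0 :=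
    eventually_exists_mem_eval_eq_zero (fun t => totalDegree_dilate_le t P)
      (hz ▸ tendsto_eval_dilate P z) (tendsto_eval_dilate P y) hy hU
  filter_upwards [hzeros.filter_mono nhdsWithin_le_nhds, self_mem_nhdsWithin]
    with t ⟨x, hxU, hx⟩ (ht : t ≠ 0)
  have hsmul : t • t⁻¹ • x = x := smul_inv_smul₀ ht x
  refine ⟨t⁻¹ • x, ?_, by rwa [hsmul]⟩
  rw [← hsmul, eval_smul_dilate] at hx
  exact (mul_eq_zero.mp hx).resolve_left (pow_ne_zero _ ht)

/-- Every nonzero point of the zero set of the top homogeneous component `P_d`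
is a limit of points of the rescaled zero sets `λ·Z(P)` as `λ → 0`. -/
theorem stmt_4 (P : MvPolynomial (Fin 2) ℂ) (hP : P ≠ 0) (d : ℕ) (hd : 1 ≤ d)
    (hdeg : P.totalDegree = d)
    (z : EuclideanSpace ℂ (Fin 2)) (hz : z ∈ zeroSet (homogeneousComponent d P))
    (hz0 : z ≠ 0) (ε : ℝ) (hε : 0 < ε) :
    ∃ lam₀ > 0, ∀ lam : ℝ, 0 < lam → lam < lam₀ →
      ∃ w ∈ zeroSet P, ‖lam • w - z‖ < ε := by
  subst hdeg
  have hball : WithLp.toLp 2 ⁻¹' Metric.ball z ε ∈ 𝓝 z.ofLp :=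
    (PiLp.continuous_toLp 2 _).continuousAt.preimage_mem_nhds (Metric.ball_mem_nhds z hε)
  obtain ⟨r, hr, h⟩ :=
    exists_forall_ofReal_of_eventually_nhdsNE_zero (stmt_4_general hP hz hball)
  refine ⟨r, hr, fun lam hpos hlt => ?_⟩
  obtain ⟨w, hw, hwz⟩ := h lam hpos hlt
  exact ⟨WithLp.toLp 2 w, hw, mem_ball_iff_norm.mp hwz⟩
end

section
/- Let P be a nonzero polynomial in two variables over ℂ with P(0,0) = 0, and let k ≥ 1 be the smallest integer such that the homogeneous component P_k of P of degree k is nonzero. For every ε > 0 and R > 0 there exists λ₀ > 0 such that for all λ > λ₀: every point z of the rescaled zero set λ·Z(P) = {λw : w ∈ Z(P)} with ‖z‖ ≤ R satisfies dist(z, Z(P_k)) < ε. -/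
open MvPolynomial

/-!
If `P` vanishes to order at least `k` at the origin, then `P (t • z) = t ^ k * F t z` where
`F t = P_k + t P_{k+1} + t ^ 2 P_{k+2} + ⋯` depends continuously on `t`, also at `t = 0`. Hence the
dilation of `Z(P)` by `t⁻¹` is `Z(F t)`, while `Z(F 0) = Z(P_k)`. On the compact set of points of
norm at most `R` at distance at least `ε` from `Z(P_k)`, the function `F 0` has no zero, so neither
does `F t` for small `t`.
-/

open Filter Metric Topology

section Homogeneous

variable {σ R : Type*} [CommSemiring R] {P Q : MvPolynomial σ R} {k : ℕ}

theorem eval_smul_of_isHomogeneous_s5 (hQ : Q.IsHomogeneous k) (t : R) (a : σ → R) :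
    eval (t • a) Q = t ^ k * eval a Q := by
  rw [eval_eq, eval_eq, Finset.mul_sum]
  refine Finset.sum_congr rfl fun d hd => ?_
  have hdeg : ∑ i ∈ d.support, d i = k := by
    simpa [Finsupp.weight_apply, Finsupp.sum] using hQ (mem_support_iff.mp hd)
  simp only [Pi.smul_apply, smul_eq_mul, mul_pow, Finset.prod_mul_distrib,
    Finset.prod_pow_eq_pow_sum, hdeg]
  ring

theorem sum_homogeneousComponent_add_eq_self (hP : ∀ j < k, homogeneousComponent j P = 0) :
    ∑ j ∈ Finset.range (P.totalDegree + 1), homogeneousComponent (k + j) P = P := by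
  have hlow : ∑ j ∈ Finset.range k, homogeneousComponent j P = 0 :=
    Finset.sum_eq_zero fun j hj => hP j (Finset.mem_range.mp hj)
  have hhigh : ∑ j ∈ Finset.range k, homogeneousComponent (P.totalDegree + 1 + j) P = 0 :=
    Finset.sum_eq_zero fun j _ => homogeneousComponent_eq_zero _ _ (by lia)
  calc ∑ j ∈ Finset.range (P.totalDegree + 1), homogeneousComponent (k + j) P
      = ∑ j ∈ Finset.range (k + (P.totalDegree + 1)), homogeneousComponent j P := by
        rw [Finset.sum_range_add _ k, hlow, zero_add]
    _ = ∑ j ∈ Finset.range (P.totalDegree + 1), homogeneousComponent j P := by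
        rw [add_comm k, Finset.sum_range_add _ (P.totalDegree + 1), hhigh, add_zero]
    _ = P := sum_homogeneousComponent P

end Homogeneous

theorem eventually_forall_zero_mem_of_isOpen {T X Y : Type*} [TopologicalSpace T]
    [TopologicalSpace X] [TopologicalSpace Y] [T1Space Y] [Zero Y] {F : T → X → Y}
    (hF : Continuous fun p : T × X => F p.1 p.2) {K U : Set X} (hK : IsCompact K) (hU : IsOpen U)
    {t₀ : T} (hzero : ∀ x ∈ K, F t₀ x = 0 → x ∈ U) :
    ∀ᶠ t in 𝓝 t₀, ∀ x ∈ K, F t x = 0 → x ∈ U := by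
  refine hK.eventually_forall_of_forall_eventually fun x hx => ?_
  by_cases hxU : x ∈ U
  · have hnear : ∀ᶠ p : T × X in 𝓝 (t₀, x), p.2 ∈ U :=
      continuousAt_snd.eventually_mem (hU.mem_nhds hxU)
    exact hnear.mono fun _ hp _ => hp
  · have hne : F t₀ x ≠ 0 := mt (hzero x hx) hxU
    have hnear : ∀ᶠ p : T × X in 𝓝 (t₀, x), F p.1 p.2 ≠ 0 := hF.continuousAt.eventually_ne hne
    exact hnear.mono fun _ hp h => absurd h hp

section TangentConeDeformation

variable {σ R : Type*} [CommSemiring R] {P : MvPolynomial σ R} {k : ℕ}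

/-- The deformation `P_k + t P_{k+1} + t ^ 2 P_{k+2} + ⋯` of `P` to its degree-`k` component. When
`P` vanishes to order at least `k` at the origin, this is `t ^ (-k) * P (t • z)`, continued to
`t = 0`. -/
noncomputable def tangentConeDeformation (k : ℕ) (P : MvPolynomial σ R) (t : R) :
    MvPolynomial σ R :=
  ∑ j ∈ Finset.range (P.totalDegree + 1), t ^ j • homogeneousComponent (k + j) P

theorem tangentConeDeformation_zero (k : ℕ) (P : MvPolynomial σ R) :
    tangentConeDeformation k P 0 = homogeneousComponent k P := by
  simp [tangentConeDeformation, Finset.sum_range_succ']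

theorem eval_tangentConeDeformation (k : ℕ) (P : MvPolynomial σ R) (t : R) (a : σ → R) :
    eval a (tangentConeDeformation k P t) =
      ∑ j ∈ Finset.range (P.totalDegree + 1), t ^ j * eval a (homogeneousComponent (k + j) P) := by
  simp only [tangentConeDeformation, map_sum, smul_eval]

theorem eval_smul_eq_pow_mul_eval_tangentConeDeformation
    (hP : ∀ j < k, homogeneousComponent j P = 0) (t : R) (a : σ → R) :
    eval (t • a) P = t ^ k * eval a (tangentConeDeformation k P t) := by
  conv_lhs => rw [← sum_homogeneousComponent_add_eq_self hP]
  simp only [map_sum, eval_tangentConeDeformation, Finset.mul_sum,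
    eval_smul_of_isHomogeneous_s5 (homogeneousComponent_isHomogeneous _ P), pow_add, mul_assoc]

theorem continuous_eval_tangentConeDeformation {X : Type*} [TopologicalSpace X]
    [TopologicalSpace R] [IsTopologicalSemiring R] (k : ℕ) (P : MvPolynomial σ R) {t : X → R}
    {a : X → σ → R} (ht : Continuous t) (ha : Continuous a) :
    Continuous fun x => eval (a x) (tangentConeDeformation k P (t x)) := by
  simp only [eval_tangentConeDeformation]
  exact continuous_finsetSum _ fun j _ => (ht.pow j).mul ((continuous_eval _).comp ha)

theorem eventually_zero_tangentConeDeformation_mem_thickening {X : Type*} [PseudoMetricSpace X]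
    [TopologicalSpace R] [IsTopologicalSemiring R] [T1Space R] (k : ℕ) (P : MvPolynomial σ R)
    {a : X → σ → R} (ha : Continuous a) {K : Set X} (hK : IsCompact K) {ε : ℝ} (hε : 0 < ε) :
    ∀ᶠ t in 𝓝 (0 : R), ∀ z ∈ K, eval (a z) (tangentConeDeformation k P t) = 0 →
      z ∈ thickening ε {z | eval (a z) (homogeneousComponent k P) = 0} := by
  let F (t : R) (z : X) : R := eval (a z) (tangentConeDeformation k P t)
  have hF : Continuous fun p : R × X => F p.1 p.2 :=
    continuous_eval_tangentConeDeformation k P continuous_fst (ha.comp continuous_snd)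
  refine eventually_forall_zero_mem_of_isOpen hF hK isOpen_thickening
    fun z _ hz => self_subset_thickening hε _ ?_
  simpa only [F, tangentConeDeformation_zero, Set.mem_ofPred_eq] using hz

theorem eval_smul_tangentConeDeformation_inv_eq_zero {𝕜 : Type*} [Field 𝕜] {P : MvPolynomial σ 𝕜}
    (hP : ∀ j < k, homogeneousComponent j P = 0) {c : 𝕜} (hc : c ≠ 0) {a : σ → 𝕜}
    (ha : eval a P = 0) : eval (c • a) (tangentConeDeformation k P c⁻¹) = 0 := by
  refine (mul_eq_zero_iff_left (pow_ne_zero k (inv_ne_zero hc))).mp ?_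
  rw [← eval_smul_eq_pow_mul_eval_tangentConeDeformation hP, inv_smul_smul₀ hc, ha]

end TangentConeDeformation

/-- The linear forms `x i` play the role of the coordinates on `E`. The conclusion avoids
`Metric.infDist`, whose value is `0` when the zero locus is empty. -/
theorem stmt_5_general {𝕜 E σ : Type*} [NormedField 𝕜] [SeminormedAddCommGroup E]
    [NormedSpace 𝕜 E] [ProperSpace E] (x : σ → E →L[𝕜] 𝕜) (P : MvPolynomial σ 𝕜) (k : ℕ)
    (hmin : ∀ j < k, homogeneousComponent j P = 0) (ε R : ℝ) (hε : 0 < ε) :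
    ∃ r > 0, ∀ c : 𝕜, r < ‖c‖ → ∀ w : E, eval (fun i => x i w) P = 0 → ‖c • w‖ ≤ R →
      c • w ∈ thickening ε {z | eval (fun i => x i z) (homogeneousComponent k P) = 0} := by
  obtain ⟨δ, hδ, hball⟩ := Metric.eventually_nhds_iff.mp <|
    eventually_zero_tangentConeDeformation_mem_thickening k P
      (by fun_prop : Continuous fun z i => x i z) (isCompact_closedBall 0 R) hε
  refine ⟨δ⁻¹, inv_pos.mpr hδ, fun c hc w hw hwR => ?_⟩
  have hc0 : c ≠ 0 := norm_pos_iff.mp ((inv_pos.mpr hδ).trans hc)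
  have hinv : dist c⁻¹ 0 < δ := by
    rw [dist_zero_right, norm_inv]
    exact inv_lt_of_inv_lt₀ hδ hc
  have hzero : eval (fun i => x i (c • w)) (tangentConeDeformation k P c⁻¹) = 0 := by
    simpa only [map_smul, Pi.smul_def] using
      eval_smul_tangentConeDeformation_inv_eq_zero hmin hc0 hw
  exact hball hinv _ (mem_closedBall_zero_iff.mpr hwR) hzero

/-- If `P` vanishes at the origin and `k ≥ 1` is minimal with the degree-`k`
homogeneous component `P_k` nonzero, then for every `ε, R > 0` there is `λ₀ > 0` such that for
all `λ > λ₀`, every point of `λ·Z(P)` of norm at most `R` is within distance `ε` of `Z(P_k)`. -/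
theorem stmt_5 (P : MvPolynomial (Fin 2) ℂ) (hP : P ≠ 0)
    (h0 : MvPolynomial.eval (fun _ => (0 : ℂ)) P = 0)
    (k : ℕ) (hk : 1 ≤ k) (hk0 : homogeneousComponent k P ≠ 0)
    (hmin : ∀ j : ℕ, j < k → homogeneousComponent j P = 0)
    (ε R : ℝ) (hε : 0 < ε) (hR : 0 < R) :
    ∃ lam₀ > 0, ∀ lam : ℝ, lam₀ < lam →
      ∀ w : EuclideanSpace ℂ (Fin 2), w ∈ zeroSet P → ‖lam • w‖ ≤ R →
        Metric.infDist (lam • w) (zeroSet (homogeneousComponent k P)) < ε := by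
  obtain ⟨r, hr, h⟩ := stmt_5_general (EuclideanSpace.proj (𝕜 := ℂ)) P k hmin ε R hε
  refine ⟨r, hr, fun lam hlam w hw hwR => ?_⟩
  have hnorm : r < ‖(lam : ℂ)‖ := by simpa using hlam.trans_le (le_abs_self lam)
  obtain ⟨z, hz, hdist⟩ := mem_thickening_iff.mp (h lam hnorm w hw hwR)
  exact (infDist_le_dist_of_mem hz).trans_lt hdist
end

section
/- Let a, b ∈ ℝ with (a,b) ≠ (0,0) and define G : ℝ² → ℂ² by G(x₁,x₂) = ( a x₁ − b x₂ + i(x₁² − x₂²) , a x₂ + b x₁ − 2i x₁ x₂ ). Then at every point of ℝ²: (i) ω(∂₁G, ∂₂G) = 0, so the image of G is Lagrangian; (ii) the complex determinant det_ℂ(∂₁G, ∂₂G) = (∂₁G)₁(∂₂G)₂ − (∂₁G)₂(∂₂G)₁ equals a² + b² + 4(x₁² + x₂²), which is real and positive; and (iii) G is injective. Hence G is an injective immersion whose image is an embedded special Lagrangian in ℂ² with Lagrangian angle 0, diffeomorphic to ℝ². -/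
/-- The standard symplectic form `ω(u,v) = Im⟨u,v⟩ = Σⱼ Im(conj(uⱼ)·vⱼ)` on `ℂ²`. -/
noncomputable def omega2 (u v : ℂ × ℂ) : ℝ :=
  ((starRingEnd ℂ) u.1 * v.1 + (starRingEnd ℂ) u.2 * v.2).im

/-- The parametrisation `G(x₁,x₂) = (ax₁ − bx₂ + i(x₁² − x₂²), ax₂ + bx₁ − 2ix₁x₂)` of the
special Lagrangian `L(a+ib)` asymptotic to a multiplicity two plane. -/
noncomputable def Gmap (a b : ℝ) (x : ℝ × ℝ) : ℂ × ℂ :=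
  (((a * x.1 - b * x.2 : ℝ) : ℂ) + Complex.I * ((x.1 ^ 2 - x.2 ^ 2 : ℝ) : ℂ),
   ((a * x.2 + b * x.1 : ℝ) : ℂ) - 2 * Complex.I * ((x.1 * x.2 : ℝ) : ℂ))

/-!
With `c = a + ib` and `w = x₁ + ix₂`, the map `G` is the composition of the holomorphic curve
`w ↦ (cw, w²)` with the real-linear hyperkähler rotation `(p, q) ↦ (Re p + i Re q, Im p - i Im q)`.
The rotation pulls `ω` back to `Re (dz₁ ∧ dz₂)` and `dz₁ ∧ dz₂` to `ω - i Im (dz₁ ∧ dz₂)`. Along a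
holomorphic curve `∂₂γ = i ∂₁γ`, so `dz₁ ∧ dz₂` vanishes while `ω(∂₁γ, ∂₂γ) = |γ'|²`; hence the
rotated curve is special Lagrangian of angle `0` with area density `|γ'|²`. Here
`|γ'|² = |c|² + 4|w|²`, and `cw` alone determines `w` because `c ≠ 0`.
-/

/-- The standard holomorphic volume form `dz₁ ∧ dz₂` on `ℂ²`. -/
def complexDet (u v : ℂ × ℂ) : ℂ := u.1 * v.2 - u.2 * v.1

lemma complexDet_self_smul (c : ℂ) (u : ℂ × ℂ) : complexDet u (c • u) = 0 := by
  simp only [complexDet, Prod.smul_fst, Prod.smul_snd, smul_eq_mul]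
  ring

lemma omega2_self_I_smul (u : ℂ × ℂ) : omega2 u (Complex.I • u) = ‖u.1‖ ^ 2 + ‖u.2‖ ^ 2 := by
  simp [omega2, Complex.sq_norm, Complex.normSq_apply]

/-- The hyperkähler rotation `(p, q) ↦ (Re p + i Re q, Im p - i Im q)` of `ℂ² = ℝ⁴`, a real-linear
involution which turns complex curves into special Lagrangians. -/
noncomputable def hyperkahlerRotation : (ℂ × ℂ) ≃L[ℝ] ℂ × ℂ :=
  LinearEquiv.toContinuousLinearEquiv
    { toFun := fun u ↦ (⟨u.1.re, u.2.re⟩, ⟨u.1.im, -u.2.im⟩)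
      invFun := fun u ↦ (⟨u.1.re, u.2.re⟩, ⟨u.1.im, -u.2.im⟩)
      map_add' := fun u v ↦ by ext <;> apply Complex.ext <;> simp [add_comm]
      map_smul' := fun r u ↦ by ext <;> apply Complex.ext <;> simp
      left_inv := fun u ↦ by simp
      right_inv := fun u ↦ by simp }

lemma hyperkahlerRotation_apply (u : ℂ × ℂ) :
    hyperkahlerRotation u = (⟨u.1.re, u.2.re⟩, ⟨u.1.im, -u.2.im⟩) :=
  rfl

lemma omega2_hyperkahlerRotation (u v : ℂ × ℂ) :
    omega2 (hyperkahlerRotation u) (hyperkahlerRotation v) = (complexDet u v).re := by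
  simp only [omega2, complexDet, hyperkahlerRotation_apply, Complex.add_im, Complex.sub_re,
    Complex.mul_re, Complex.mul_im, Complex.conj_re, Complex.conj_im]
  ring

lemma complexDet_hyperkahlerRotation (u v : ℂ × ℂ) :
    complexDet (hyperkahlerRotation u) (hyperkahlerRotation v) =
      ⟨omega2 u v, -(complexDet u v).im⟩ := by
  apply Complex.ext <;>
  · simp only [omega2, complexDet, hyperkahlerRotation_apply, Complex.add_im, Complex.sub_re,
      Complex.sub_im, Complex.mul_re, Complex.mul_im, Complex.conj_re, Complex.conj_im]
    ring

lemma equivRealProdCLM_symm_eq_mk (x : ℝ × ℝ) : Complex.equivRealProdCLM.symm x = ⟨x.1, x.2⟩ :=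
  rfl

/-- The hyperkähler rotation of the curve `γ : ℂ → ℂ²`, as a map of the real coordinates
`(x₁, x₂)` of the parameter `x₁ + ix₂`. -/
noncomputable def rotatedCurve (γ : ℂ → ℂ × ℂ) (x : ℝ × ℝ) : ℂ × ℂ :=
  hyperkahlerRotation (γ (Complex.equivRealProdCLM.symm x))

lemma rotatedCurve_injective {γ : ℂ → ℂ × ℂ} (hγ : Function.Injective γ) :
    Function.Injective (rotatedCurve γ) :=
  hyperkahlerRotation.injective.comp (hγ.comp Complex.equivRealProdCLM.symm.injective)

section Derivative

variable {γ : ℂ → ℂ × ℂ} {γ' : ℂ × ℂ} {x : ℝ × ℝ}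

lemma hasFDerivAt_rotatedCurve (hγ : HasDerivAt γ γ' (Complex.equivRealProdCLM.symm x)) :
    HasFDerivAt (rotatedCurve γ)
      ((hyperkahlerRotation : ℂ × ℂ →L[ℝ] ℂ × ℂ) ∘L
        ((ContinuousLinearMap.toSpanSingleton ℂ γ').restrictScalars ℝ ∘L
          (Complex.equivRealProdCLM.symm : ℝ × ℝ →L[ℝ] ℂ))) x :=
  hyperkahlerRotation.hasFDerivAt.comp x
    ((hγ.hasFDerivAt.restrictScalars ℝ).comp x Complex.equivRealProdCLM.symm.hasFDerivAt)

lemma fderiv_rotatedCurve_apply (hγ : HasDerivAt γ γ' (Complex.equivRealProdCLM.symm x))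
    (v : ℝ × ℝ) :
    fderiv ℝ (rotatedCurve γ) x v =
      hyperkahlerRotation (Complex.equivRealProdCLM.symm v • γ') := by
  rw [(hasFDerivAt_rotatedCurve hγ).fderiv]
  rfl

lemma fderiv_rotatedCurve_one_zero (hγ : HasDerivAt γ γ' (Complex.equivRealProdCLM.symm x)) :
    fderiv ℝ (rotatedCurve γ) x (1, 0) = hyperkahlerRotation γ' := by
  simp [fderiv_rotatedCurve_apply hγ, Complex.equivRealProdCLM_symm_apply]

lemma fderiv_rotatedCurve_zero_one (hγ : HasDerivAt γ γ' (Complex.equivRealProdCLM.symm x)) :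
    fderiv ℝ (rotatedCurve γ) x (0, 1) = hyperkahlerRotation (Complex.I • γ') := by
  simp [fderiv_rotatedCurve_apply hγ, Complex.equivRealProdCLM_symm_apply]

lemma omega2_fderiv_rotatedCurve (hγ : HasDerivAt γ γ' (Complex.equivRealProdCLM.symm x)) :
    omega2 (fderiv ℝ (rotatedCurve γ) x (1, 0)) (fderiv ℝ (rotatedCurve γ) x (0, 1)) = 0 := by
  rw [fderiv_rotatedCurve_one_zero hγ, fderiv_rotatedCurve_zero_one hγ,
    omega2_hyperkahlerRotation, complexDet_self_smul, Complex.zero_re]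

lemma complexDet_fderiv_rotatedCurve (hγ : HasDerivAt γ γ' (Complex.equivRealProdCLM.symm x)) :
    complexDet (fderiv ℝ (rotatedCurve γ) x (1, 0)) (fderiv ℝ (rotatedCurve γ) x (0, 1)) =
      ((‖γ'.1‖ ^ 2 + ‖γ'.2‖ ^ 2 : ℝ) : ℂ) := by
  rw [fderiv_rotatedCurve_one_zero hγ, fderiv_rotatedCurve_zero_one hγ,
    complexDet_hyperkahlerRotation, complexDet_self_smul, omega2_self_I_smul, Complex.zero_im,
    neg_zero, Complex.ofReal_def]

end Derivative

/-- The complex curve `w ↦ (cw, w²)`, whose hyperkähler rotation is `L(c)`. -/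
def parabola (c w : ℂ) : ℂ × ℂ := (c * w, w ^ 2)

lemma hasDerivAt_parabola (c w : ℂ) : HasDerivAt (parabola c) (c, 2 * w) w := by
  have hlinear : HasDerivAt (fun z ↦ c * z) c w := by
    simpa using (hasDerivAt_id w).const_mul c
  have hsquare : HasDerivAt (fun z : ℂ ↦ z ^ 2) (2 * w) w := by
    simpa using hasDerivAt_pow 2 w
  exact hlinear.prodMk hsquare

lemma parabola_injective {c : ℂ} (hc : c ≠ 0) : Function.Injective (parabola c) :=
  fun _ _ h ↦ mul_left_cancel₀ hc (congrArg Prod.fst h)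

lemma Gmap_eq_rotatedCurve (a b : ℝ) : Gmap a b = rotatedCurve (parabola ⟨a, b⟩) := by
  funext x
  ext <;>
  · simp only [Gmap, rotatedCurve, equivRealProdCLM_symm_eq_mk, parabola, hyperkahlerRotation_apply,
      pow_two, Complex.mul_re, Complex.mul_im]
    rw [Complex.mk_eq_add_mul_I]
    push_cast
    ring

/-- For `(a,b) ≠ (0,0)`, at every point of `ℝ²` the map `G` is differentiable
with `ω(∂₁G, ∂₂G) = 0` and `det_ℂ(∂₁G, ∂₂G) = a² + b² + 4(x₁² + x₂²)`, which is real and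
positive; moreover `G` is injective. Hence `G` is an injective immersion whose image is an
embedded special Lagrangian with Lagrangian angle `0`. -/
theorem stmt_12 (a b : ℝ) (hab : (a, b) ≠ (0, 0)) :
    (∀ x : ℝ × ℝ,
      DifferentiableAt ℝ (Gmap a b) x ∧
      omega2 (fderiv ℝ (Gmap a b) x (1, 0)) (fderiv ℝ (Gmap a b) x (0, 1)) = 0 ∧
      (fderiv ℝ (Gmap a b) x (1, 0)).1 * (fderiv ℝ (Gmap a b) x (0, 1)).2
        - (fderiv ℝ (Gmap a b) x (1, 0)).2 * (fderiv ℝ (Gmap a b) x (0, 1)).1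
        = ((a ^ 2 + b ^ 2 + 4 * (x.1 ^ 2 + x.2 ^ 2) : ℝ) : ℂ) ∧
      0 < a ^ 2 + b ^ 2 + 4 * (x.1 ^ 2 + x.2 ^ 2)) ∧
    Function.Injective (Gmap a b) := by
  have hc : (⟨a, b⟩ : ℂ) ≠ 0 := fun h ↦
    hab (Prod.ext (congrArg Complex.re h) (congrArg Complex.im h))
  have area_density (x : ℝ × ℝ) :
      ‖(⟨a, b⟩ : ℂ)‖ ^ 2 + ‖2 * Complex.equivRealProdCLM.symm x‖ ^ 2 =
        a ^ 2 + b ^ 2 + 4 * (x.1 ^ 2 + x.2 ^ 2) := by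
    simp only [norm_mul, mul_pow, Complex.sq_norm, Complex.normSq_mk, Complex.norm_ofNat,
      equivRealProdCLM_symm_eq_mk]
    ring
  rw [Gmap_eq_rotatedCurve]
  refine ⟨fun x ↦ ?_, rotatedCurve_injective (parabola_injective hc)⟩
  have hγ := hasDerivAt_parabola ⟨a, b⟩ (Complex.equivRealProdCLM.symm x)
  rw [← area_density x]
  exact ⟨(hasFDerivAt_rotatedCurve hγ).differentiableAt, omega2_fderiv_rotatedCurve hγ,
    complexDet_fderiv_rotatedCurve hγ, by positivity⟩
end
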